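/- Let α ∈ ℝ and w ∈ 𝔻, and let k_w denote the reproducing kernel of D_α at w. Then ⟨S k_w, k_w⟩_α = w·‖k_w‖_α². Moreover, if α ≤ 0 and w ∈ (0,1), then ‖S k_w‖_α² ≤ w^{−2}·‖k_w‖_α². Consequently, for the normalized kernel g_w = k_w/‖k_w‖_α one has |⟨S g_w, g_w⟩_α| = |w|, and, when α ≤ 0 and w ∈ (0,1), ‖S g_w‖_α² − |⟨S g_w, g_w⟩_α|² ≤ w^{−2} − w². -/

import Mathlib

open Filter Topology

noncomputable section

/-- Membership in the Dirichlet-type space `D_α`, described via Taylor coefficients. -/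
def MemD (α : ℝ) (a : ℕ → ℂ) : Prop :=
  Summable (fun k : ℕ => ‖a k‖ ^ 2 * ((k : ℝ) + 1) ^ α)

/-- The norm of `D_α`, on coefficient sequences. -/
def DNorm (α : ℝ) (a : ℕ → ℂ) : ℝ :=
  Real.sqrt (∑' k : ℕ, ‖a k‖ ^ 2 * ((k : ℝ) + 1) ^ α)

/-- The inner product of `D_α`, on coefficient sequences. -/
def Dinner (α : ℝ) (a b : ℕ → ℂ) : ℂ :=
  ∑' k : ℕ, a k * (starRingEnd ℂ) (b k) * ((((k : ℝ) + 1) ^ α : ℝ) : ℂ)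

/-- Cauchy product of coefficient sequences (coefficients of the product function). -/
def mulCoeff (a b : ℕ → ℂ) : ℕ → ℂ :=
  fun k => ∑ i ∈ Finset.range (k + 1), a i * b (k - i)

/-- Coefficient sequence of the constant function `1`. -/
def oneCoeff : ℕ → ℂ := fun k => if k = 0 then 1 else 0

/-- `f` is cyclic for (the shift operator on) `D_α`: there are polynomials `p n` with
`‖p n · f - 1‖_α → 0`. -/
def Cyclic (α : ℝ) (f : ℕ → ℂ) : Prop :=
  ∃ p : ℕ → Polynomial ℂ,
    Tendsto (fun n => DNorm α (fun k => mulCoeff (p n).coeff f k - oneCoeff k)) atTop (𝓝 0)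

/-- Coefficients of `S^t f`, where `S` is the shift operator `(Sf)(z) = z f(z)`. -/
def shiftPow (t : ℕ) (a : ℕ → ℂ) : ℕ → ℂ :=
  fun k => if k < t then 0 else a (k - t)

/-- Operator norm of `S^t` on `D_α`. -/
def shiftOpNorm (α : ℝ) (t : ℕ) : ℝ :=
  sSup {r : ℝ | ∃ a : ℕ → ℂ, MemD α a ∧ DNorm α a ≤ 1 ∧ r = DNorm α (shiftPow t a)}

/-- `p` is a `d`-th optimal polynomial approximant to `1/f` in `D_α`. -/
def IsOPA (α : ℝ) (f : ℕ → ℂ) (d : ℕ) (p : Polynomial ℂ) : Prop :=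
  p.natDegree ≤ d ∧
    ∀ q : Polynomial ℂ, q.natDegree ≤ d →
      DNorm α (fun k => mulCoeff p.coeff f k - oneCoeff k) ≤
        DNorm α (fun k => mulCoeff q.coeff f k - oneCoeff k)

/-- The matrix `M` of the linear system determining the `d`-th o.p.a. to `1/f`:
`m_{j,k} = ⟨S^k f, S^j f⟩_α`. -/
def opaMatrix (α : ℝ) (d : ℕ) (f : ℕ → ℂ) : Matrix (Fin (d + 1)) (Fin (d + 1)) ℂ :=
  Matrix.of fun j k => Dinner α (shiftPow (k : ℕ) f) (shiftPow (j : ℕ) f)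

/-- The vector `b` of the linear system determining the `d`-th o.p.a. to `1/f`:
`b_j = ⟨1, S^j f⟩_α`. -/
def opaVec (α : ℝ) (d : ℕ) (f : ℕ → ℂ) : Fin (d + 1) → ℂ :=
  fun j => Dinner α oneCoeff (shiftPow (j : ℕ) f)

/-- Frobenius norm of a complex matrix. -/
def frobNorm {m n : ℕ} (M : Matrix (Fin m) (Fin n) ℂ) : ℝ :=
  Real.sqrt (∑ j, ∑ k, ‖M j k‖ ^ 2)

/-- Euclidean norm on `ℂ^m`. -/
def euclNorm {m : ℕ} (v : Fin m → ℂ) : ℝ :=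
  Real.sqrt (∑ j, ‖v j‖ ^ 2)

/-- `α`-weighted Frobenius norm: the Frobenius norm of the matrix in the orthonormal
basis `{z^k/(k+1)^{α/2}}` of the map whose matrix in `{z^k}` is `M`. -/
def wFrobNorm (α : ℝ) {m : ℕ} (M : Matrix (Fin m) (Fin m) ℂ) : ℝ :=
  Real.sqrt (∑ j, ∑ k, ‖M j k‖ ^ 2 * (((j : ℕ) : ℝ) + 1) ^ α * (((k : ℕ) : ℝ) + 1) ^ (-α))

/-- Coefficients of the reproducing kernel of `D_α` at `w ∈ 𝔻`. -/
def kern (α : ℝ) (w : ℂ) : ℕ → ℂ :=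
  fun k => (starRingEnd ℂ) w ^ k / ((((k : ℝ) + 1) ^ α : ℝ) : ℂ)

/-!
The reproducing property `⟨f, k_w⟩_α = f(w)` turns the shift into multiplication by `w`:
`⟨S f, k_w⟩_α = w f(w) = w ⟨f, k_w⟩_α`. Taking `f = k_w` or `f = g_w` gives the inner products.
For `α ≤ 0` the weights `(k + 1)^α` decrease in `k`, so `S` is a contraction of `D_α`; this beats
the factor `‖w‖⁻²`, which is larger than `1`.
-/

lemma summable_rpow_mul_geometric (s : ℝ) {r : ℝ} (hr : |r| < 1) :
    Summable fun k : ℕ => ((k : ℝ) + 1) ^ s * r ^ k := by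
  obtain ⟨m, hm⟩ := exists_nat_ge s
  have growth (k : ℕ) : ((k : ℝ) + 1) ^ s ≤ m.factorial * (k + m).choose m :=
    calc ((k : ℝ) + 1) ^ s ≤ ((k : ℝ) + 1) ^ m := by
          rw [← Real.rpow_natCast]
          exact Real.rpow_le_rpow_of_exponent_le (by simp) hm
      _ ≤ m.factorial * (k + m).choose m := by
          exact_mod_cast (Nat.pow_succ_le_ascFactorial (k + 1) m).trans_eq
            (Nat.ascFactorial_eq_factorial_mul_choose k m)
  have choose_summable : Summable fun k : ℕ => ((k + m).choose m : ℝ) * |r| ^ k :=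
    summable_choose_mul_geometric_of_norm_lt_one m (by simpa using hr)
  refine (choose_summable.mul_left (m.factorial : ℝ)).of_norm_bounded fun k => ?_
  rw [norm_mul, norm_pow, Real.norm_eq_abs r, Real.norm_of_nonneg (by positivity), ← mul_assoc]
  gcongr
  exact growth k

lemma tsum_shiftPow {M : Type*} [AddCommMonoid M] [TopologicalSpace M] (F : ℕ → ℂ → M)
    (hF : ∀ k, F k 0 = 0) (t : ℕ) (a : ℕ → ℂ) :
    ∑' k, F k (shiftPow t a k) = ∑' k, F (k + t) (a k) := by
  have support_subset :
      Function.support (fun k => F k (shiftPow t a k)) ⊆ Set.range (· + t) := by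
    intro k hk
    obtain hlt | hle := lt_or_ge k t
    · simp [shiftPow, hlt, hF] at hk
    · exact ⟨k - t, Nat.sub_add_cancel hle⟩
  rw [← (add_left_injective t).tsum_eq support_subset]
  simp [shiftPow]

section DirichletSpace

variable {α : ℝ} {a : ℕ → ℂ}

lemma dNorm_sq (α : ℝ) (a : ℕ → ℂ) :
    DNorm α a ^ 2 = ∑' k : ℕ, ‖a k‖ ^ 2 * ((k : ℝ) + 1) ^ α :=
  Real.sq_sqrt (tsum_nonneg fun _ => by positivity)

lemma dinner_self (α : ℝ) (a : ℕ → ℂ) : Dinner α a a = ((DNorm α a ^ 2 : ℝ) : ℂ) := by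
  simp [Dinner, dNorm_sq, Complex.ofReal_tsum, Complex.mul_conj']

lemma dinner_div_const_right (α : ℝ) (a b : ℕ → ℂ) (c : ℂ) :
    Dinner α a (fun k => b k / c) = Dinner α a b / (starRingEnd ℂ) c := by
  simp only [Dinner, map_div₀, mul_div_assoc', div_mul_eq_mul_div, tsum_div_const]

lemma dNorm_div_const (α : ℝ) (a : ℕ → ℂ) (c : ℂ) :
    DNorm α (fun k => a k / c) = DNorm α a / ‖c‖ := by
  simp only [DNorm, norm_div, div_pow, div_mul_eq_mul_div, tsum_div_const]
  rw [Real.sqrt_div' _ (sq_nonneg _), Real.sqrt_sq (norm_nonneg c)]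

lemma MemD.div_const (ha : MemD α a) (c : ℂ) : MemD α fun k => a k / c := by
  simpa only [MemD, norm_div, div_pow, div_mul_eq_mul_div] using Summable.div_const ha (‖c‖ ^ 2)

lemma MemD.dNorm_pos (ha : MemD α a) {k : ℕ} (hk : a k ≠ 0) : 0 < DNorm α a :=
  Real.sqrt_pos.2 <| Summable.tsum_pos ha (fun _ => by positivity) k (by positivity)

lemma MemD.dNorm_shiftPow_le (ha : MemD α a) (hα : α ≤ 0) (t : ℕ) :
    DNorm α (shiftPow t a) ≤ DNorm α a := by
  have term_le (k : ℕ) :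
      ‖a k‖ ^ 2 * (((k + t : ℕ) : ℝ) + 1) ^ α ≤ ‖a k‖ ^ 2 * ((k : ℝ) + 1) ^ α := by
    gcongr ?_ * ?_
    refine Real.rpow_le_rpow_of_nonpos (by positivity) ?_ hα
    gcongr
    exact Nat.le_add_right k t
  unfold DNorm
  rw [tsum_shiftPow (fun k z => ‖z‖ ^ 2 * ((k : ℝ) + 1) ^ α) (by simp)]
  have shift_summable := Summable.of_nonneg_of_le (fun _ => by positivity) term_le ha
  exact Real.sqrt_le_sqrt (shift_summable.tsum_le_tsum term_le ha)

end DirichletSpace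

section Kernel

variable {α : ℝ} {w : ℂ}

lemma memD_kern (α : ℝ) (hw : ‖w‖ < 1) : MemD α (kern α w) := by
  have norm_sq_lt : |‖w‖ ^ 2| < 1 := by
    simpa using pow_lt_one₀ (norm_nonneg w) hw two_ne_zero
  refine (summable_rpow_mul_geometric (-α) norm_sq_lt).congr fun k => ?_
  have weight_pos : 0 < ((k : ℝ) + 1) ^ α := by positivity
  rw [kern, norm_div, norm_pow, RCLike.norm_conj, Complex.norm_real,
    Real.norm_of_nonneg weight_pos.le, Real.rpow_neg (by positivity), pow_right_comm]
  field_simp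

lemma dinner_kern (α : ℝ) (a : ℕ → ℂ) (w : ℂ) : Dinner α a (kern α w) = ∑' k, a k * w ^ k := by
  refine tsum_congr fun k => ?_
  have weight_ne_zero : ((((k : ℝ) + 1) ^ α : ℝ) : ℂ) ≠ 0 :=
    Complex.ofReal_ne_zero.2 (by positivity)
  rw [kern, map_div₀, map_pow, Complex.conj_conj, Complex.conj_ofReal, mul_assoc,
    div_mul_cancel₀ _ weight_ne_zero]

lemma dinner_shiftPow_kern (α : ℝ) (t : ℕ) (a : ℕ → ℂ) (w : ℂ) :
    Dinner α (shiftPow t a) (kern α w) = w ^ t * Dinner α a (kern α w) := by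
  rw [dinner_kern, dinner_kern, tsum_shiftPow (fun k z => z * w ^ k) (by simp), ← tsum_mul_left]
  exact tsum_congr fun k => by ring

/-- Coefficients of the normalized reproducing kernel `g_w = k_w / ‖k_w‖_α`, the test function
for the shift; it is `0` by convention when `‖k_w‖_α = 0`. -/
def normKern (α : ℝ) (w : ℂ) : ℕ → ℂ :=
  fun k => kern α w k / ((DNorm α (kern α w) : ℝ) : ℂ)

lemma dNorm_normKern (h : MemD α (kern α w)) : DNorm α (normKern α w) = 1 := by
  have norm_pos : 0 < DNorm α (kern α w) := h.dNorm_pos (k := 0) (by simp [kern])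
  unfold normKern
  rw [dNorm_div_const, Complex.norm_of_nonneg norm_pos.le, div_self norm_pos.ne']

lemma dinner_shiftPow_normKern (α : ℝ) (t : ℕ) (a : ℕ → ℂ) (w : ℂ) :
    Dinner α (shiftPow t a) (normKern α w) = w ^ t * Dinner α a (normKern α w) := by
  unfold normKern
  rw [dinner_div_const_right, dinner_div_const_right, dinner_shiftPow_kern, mul_div_assoc]

lemma dinner_shiftPow_normKern_self (t : ℕ) (h : MemD α (kern α w)) :
    Dinner α (shiftPow t (normKern α w)) (normKern α w) = w ^ t := by
  rw [dinner_shiftPow_normKern, dinner_self, dNorm_normKern h, one_pow, Complex.ofReal_one, mul_one]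

end Kernel

theorem kernel_shift_computations_general (α : ℝ) (w : ℂ) (t : ℕ) (h : MemD α (kern α w)) :
    Dinner α (shiftPow t (kern α w)) (kern α w) =
      w ^ t * ((DNorm α (kern α w) ^ 2 : ℝ) : ℂ) ∧
    (α ≤ 0 → DNorm α (shiftPow t (kern α w)) ^ 2 ≤ DNorm α (kern α w) ^ 2) ∧
    ‖Dinner α (shiftPow t (normKern α w)) (normKern α w)‖ = ‖w ^ t‖ ∧
    (α ≤ 0 → DNorm α (shiftPow t (normKern α w)) ^ 2 -
      ‖Dinner α (shiftPow t (normKern α w)) (normKern α w)‖ ^ 2 ≤ 1 - ‖w ^ t‖ ^ 2) := by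
  refine ⟨by rw [dinner_shiftPow_kern, dinner_self], fun hα => ?_,
    by rw [dinner_shiftPow_normKern_self t h], fun hα => ?_⟩
  · exact pow_le_pow_left₀ (Real.sqrt_nonneg _) (h.dNorm_shiftPow_le hα t) 2
  · have contraction : DNorm α (shiftPow t (normKern α w)) ≤ 1 :=
      ((h.div_const _).dNorm_shiftPow_le hα t).trans_eq (dNorm_normKern h)
    rw [dinner_shiftPow_normKern_self t h]
    gcongr
    exact pow_le_one₀ (Real.sqrt_nonneg _) contraction

/-- Kernel computations: `⟨S k_w, k_w⟩_α = w ‖k_w‖_α²`; for `α ≤ 0` and `w ∈ (0,1)`,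
`‖S k_w‖_α² ≤ w⁻² ‖k_w‖_α²`; for the normalized kernel `g_w`, `|⟨S g_w, g_w⟩_α| = |w|`
and, when `α ≤ 0`, `w ∈ (0,1)`, `‖S g_w‖_α² - |⟨S g_w, g_w⟩_α|² ≤ w⁻² - w²`. -/
theorem kernel_shift_computations (α : ℝ) (w : ℂ) (hw : ‖w‖ < 1) :
    Dinner α (shiftPow 1 (kern α w)) (kern α w) = w * ((DNorm α (kern α w) ^ 2 : ℝ) : ℂ) ∧
    (α ≤ 0 → w.im = 0 → 0 < w.re → w.re < 1 →
      DNorm α (shiftPow 1 (kern α w)) ^ 2 ≤ ‖w‖⁻¹ ^ 2 * DNorm α (kern α w) ^ 2) ∧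
    ‖Dinner α (shiftPow 1 (fun k => kern α w k / ((DNorm α (kern α w) : ℝ) : ℂ)))
        (fun k => kern α w k / ((DNorm α (kern α w) : ℝ) : ℂ))‖ = ‖w‖ ∧
    (α ≤ 0 → w.im = 0 → 0 < w.re → w.re < 1 →
      DNorm α (shiftPow 1 (fun k => kern α w k / ((DNorm α (kern α w) : ℝ) : ℂ))) ^ 2 -
        ‖Dinner α (shiftPow 1 (fun k => kern α w k / ((DNorm α (kern α w) : ℝ) : ℂ)))
          (fun k => kern α w k / ((DNorm α (kern α w) : ℝ) : ℂ))‖ ^ 2 ≤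
        ‖w‖⁻¹ ^ 2 - ‖w‖ ^ 2) := by
  obtain ⟨inner_kern, norm_kern, inner_normKern, variance_normKern⟩ := by
    simpa only [pow_one] using kernel_shift_computations_general α w 1 (memD_kern α hw)
  have one_le_inv_sq (hre : 0 < w.re) : 1 ≤ ‖w‖⁻¹ ^ 2 :=
    one_le_pow₀ ((one_le_inv₀ (hre.trans_le (Complex.re_le_norm w))).2 hw.le)
  exact ⟨inner_kern,
    fun hα _ hre _ =>
      (norm_kern hα).trans (le_mul_of_one_le_left (sq_nonneg _) (one_le_inv_sq hre)),
    inner_normKern,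
    fun hα _ hre _ => (variance_normKern hα).trans (sub_le_sub_right (one_le_inv_sq hre) _)⟩
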